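/- There exist ε > 0 and C > 0 such that for every Δt ∈ [0, ε), with (β_Σ(Δt), β_1(Δt), …, β_k(Δt)) the unique solution of the constrained system and λ(Δt) := β_Σ(Δt)σ_S²/(σ_K² + β_Σ(Δt)²σ_S²), one has λ(Δt)β_Σ(Δt) < 1 and |λ(Δt) − ((k^{1/2}/(1+k))(σ_S/σ_K) + (k^{1/4}(k−1)/(2(1+k)^{3/2}))·(1/k)Σ_{j=1}^k γ_j^{1/2}·(σ_S/σ_K)^{1/2}·√Δt)| ≤ C·Δt. -/

import Mathlib

/-!
Put `r = σK / σS`, `u = βSum / r` and `x i = β i * βSum / r ^ 2`. The system becomes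
`∑ i, x i = u ^ 2`, `x i ∈ (0, 1]` and
`(1 - x i) ^ 2 + ρ i * Δt * x i * (1 - x i) = γ i * r * Δt * (u + u⁻¹) * x i`.
The left side decreases in `x i`. In terms of the share `z = x i / u ^ 2` of the total order flow,
the right side is a multiple of `(u ^ 3 + u) * z`, so each equation makes `z` strictly decreasing in
`u`; as the shares sum to one, there is at most one solution. Existence is the intermediate value
theorem applied to `u ↦ ∑ i, x i - u ^ 2`, where `x i` is the root of the `i`-th quadratic.

For `Δt → 0` the equation gives `1 - x i = √(γ i * r * (u + u⁻¹) * x i * Δt) + O(Δt)` with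
`x i = 1 + O(√Δt)` and `u = √k + O(√Δt)`. Summing over `i` yields `k - u ^ 2` up to `O(Δt)`, and a
Taylor expansion of `λ = r⁻¹ * u / (1 + u ^ 2)` in `u ^ 2` concludes.
-/

open Asymptotics Filter Set Topology

section Quadratic

variable {p t T u v w q a x y : ℝ}

lemma strictAntiOn_sq_one_sub_add (hp : p ∈ Icc (0 : ℝ) 2) :
    StrictAntiOn (fun x ↦ (1 - x) ^ 2 + p * x * (1 - x)) (Icc 0 1) := by
  intro x hx y hy hxy
  have hpos : 0 < (2 - p) * (2 - x - y) + p * (x + y) := by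
    rcases hp.1.eq_or_lt with rfl | h0
    · linarith [hx.1, hy.2]
    · have h₁ : 0 ≤ (2 - p) * (2 - x - y) := mul_nonneg (by linarith [hp.2]) (by linarith [hy.2])
      have h₂ : 0 < p * (x + y) := mul_pos h0 (by linarith [hx.1])
      linarith
  have hdiff : (1 - x) ^ 2 + p * x * (1 - x) - ((1 - y) ^ 2 + p * y * (1 - y))
      = (y - x) * (((2 - p) * (2 - x - y) + p * (x + y)) / 2) := by ring
  beta_reduce
  rw [← sub_pos, hdiff]
  exact mul_pos (sub_pos.2 hxy) (half_pos hpos)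

/-- The root in `(0, 1]` of `(1 - x) ^ 2 + p * x * (1 - x) = T * x`, written with the square root in
the denominator so that it makes sense also when the leading coefficient `1 - p` vanishes. -/
noncomputable def quadraticRoot (p T : ℝ) : ℝ :=
  2 / (2 - p + T + √((T - p) ^ 2 + 4 * T))

lemma two_le_quadraticRoot_denom (hT : 0 ≤ T) : 2 ≤ 2 - p + T + √((T - p) ^ 2 + 4 * T) := by
  have : p - T ≤ √((T - p) ^ 2 + 4 * T) := Real.le_sqrt_of_sq_le (by linarith [sub_sq_comm p T])
  linarith

lemma quadraticRoot_mem_Ioc (hT : 0 ≤ T) : quadraticRoot p T ∈ Ioc (0 : ℝ) 1 := by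
  have h2 := two_le_quadraticRoot_denom (p := p) hT
  exact ⟨div_pos two_pos (by linarith), (div_le_one (by linarith)).2 h2⟩

lemma quadraticRoot_spec (hT : 0 ≤ T) :
    (1 - quadraticRoot p T) ^ 2 + p * quadraticRoot p T * (1 - quadraticRoot p T)
      = T * quadraticRoot p T := by
  have h2 := two_le_quadraticRoot_denom (p := p) hT
  have hsq : √((T - p) ^ 2 + 4 * T) ^ 2 = (T - p) ^ 2 + 4 * T := Real.sq_sqrt (by positivity)
  rw [quadraticRoot]
  generalize √((T - p) ^ 2 + 4 * T) = s at *
  have : 2 - p + T + s ≠ 0 := by linarith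
  field_simp
  linear_combination hsq

lemma le_quadraticRoot (hp : 0 ≤ p) (hT : 0 ≤ T) (hy : y ≤ 1)
    (h : T * y ≤ (1 - y) ^ 2 + p * y * (1 - y)) : y ≤ quadraticRoot p T := by
  obtain ⟨hx0, -⟩ := quadraticRoot_mem_Ioc (p := p) hT
  have hspec := quadraticRoot_spec (p := p) hT
  generalize quadraticRoot p T = x at *
  by_contra! hxy
  have hy0 : 0 < y := hx0.trans hxy
  have hfactor : x * ((1 - y) ^ 2 + p * y * (1 - y) - T * y)
      = (y - x) * ((1 - p) * (x * y) - 1) := by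
    linear_combination y * hspec
  have hxy1 : x * y < 1 := mul_lt_one_of_nonneg_of_lt_one_left hx0.le (hxy.trans_le hy) hy
  have hpxy : 0 ≤ p * (x * y) := by positivity
  have hneg : (y - x) * ((1 - p) * (x * y) - 1) < 0 :=
    mul_neg_of_pos_of_neg (sub_pos.2 hxy) (by linarith)
  exact hneg.not_ge (hfactor ▸ mul_nonneg hx0.le (sub_nonneg.2 h))

lemma continuousOn_quadraticRoot : ContinuousOn (quadraticRoot p) (Ici 0) :=
  continuousOn_const.div (by fun_prop) fun _ hT ↦ by
    linarith [two_le_quadraticRoot_denom (p := p) hT]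

/-- As `u → 0`, the polynomial side of the quadratic at `u ^ 2` tends to `1`, and its right side
`t * (u + u⁻¹) * u ^ 2` to `0`. -/
lemma exists_sq_le_quadraticRoot (hp : 0 ≤ p) (ht : 0 ≤ t) :
    ∃ u ∈ Ioc (0 : ℝ) 1, u ^ 2 ≤ quadraticRoot p (t * (u + u⁻¹)) := by
  have hcont : Continuous fun u : ℝ ↦
      (1 - u ^ 2) ^ 2 + p * u ^ 2 * (1 - u ^ 2) - t * (u ^ 3 + u) := by fun_prop
  have hev : ∀ᶠ u in 𝓝[>] (0 : ℝ),
      0 < (1 - u ^ 2) ^ 2 + p * u ^ 2 * (1 - u ^ 2) - t * (u ^ 3 + u) :=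
    nhdsWithin_le_nhds (hcont.continuousAt.eventually (lt_mem_nhds (by norm_num)))
  obtain ⟨u, hu, hu01⟩ := (hev.and (Ioc_mem_nhdsGT one_pos)).exists
  have hu0 := hu01.1
  refine ⟨u, hu01, le_quadraticRoot hp (by positivity) (pow_le_one₀ hu0.le hu01.2) ?_⟩
  have : t * (u + u⁻¹) * u ^ 2 = t * (u ^ 3 + u) := by field_simp
  linarith

/-- Both sides of the equation are monotone in the pair `(u, x / u ^ 2)`, in opposite directions. -/
lemma eq_and_eq_of_share_le (hp : p ∈ Icc (0 : ℝ) 2) (ht : 0 ≤ t) (hu : 0 < u) (huv : u ≤ v)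
    (hx : x ∈ Ioc (0 : ℝ) 1) (hy : y ∈ Ioc (0 : ℝ) 1)
    (hxu : (1 - x) ^ 2 + p * x * (1 - x) = t * (u + u⁻¹) * x)
    (hyv : (1 - y) ^ 2 + p * y * (1 - y) = t * (v + v⁻¹) * y)
    (hshare : x / u ^ 2 ≤ y / v ^ 2) : u = v ∧ x = y := by
  have hv : 0 < v := hu.trans_le huv
  have hx0 := hx.1
  have hy0 := hy.1
  have hxy : x ≤ y := calc
    x = u ^ 2 * (x / u ^ 2) := by field_simp
    _ ≤ v ^ 2 * (y / v ^ 2) := by gcongr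
    _ = y := by field_simp
  have hrhs : t * (u + u⁻¹) * x ≤ t * (v + v⁻¹) * y := calc
    t * (u + u⁻¹) * x = t * (u ^ 3 + u) * (x / u ^ 2) := by field_simp
    _ ≤ t * (v ^ 3 + v) * (y / v ^ 2) := by gcongr
    _ = t * (v + v⁻¹) * y := by field_simp
  have hyx : y ≤ x := by
    refine ((strictAntiOn_sq_one_sub_add hp).le_iff_ge (Ioc_subset_Icc_self hx)
      (Ioc_subset_Icc_self hy)).1 ?_
    simpa only [hxu, hyv] using hrhs
  obtain rfl : x = y := hxy.antisymm hyx
  have hvu : v ^ 2 ≤ u ^ 2 :=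
    (div_le_div_iff_of_pos_left hx0 (by positivity) (by positivity)).1 hshare
  exact ⟨huv.antisymm (le_of_sq_le_sq hvu hu.le), rfl⟩

lemma abs_sub_sqrt_le_of_sq_add_mul_eq (hw : 0 ≤ w) (hq : 0 ≤ q) (h : w ^ 2 + q * w = a) :
    |w - √a| ≤ q := by
  have hqw : 0 ≤ q * w := mul_nonneg hq hw
  have hupper : w ≤ √a := Real.le_sqrt_of_sq_le (by linarith)
  have hlower : √a ≤ w + q := Real.sqrt_le_left (by positivity) |>.2 (by nlinarith)
  rw [abs_le]
  constructor <;> linarith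

end Quadratic

variable {ι : Type*} [Fintype ι]

/-- The constrained system in the variables `u = βSum / r` and `x i = β i * βSum / r ^ 2`, where
`r = σK / σS`, with parameters `p i = ρ i * Δt` and `t i = γ i * r * Δt`. -/
structure IsNormalizedSolution (p t : ι → ℝ) (u : ℝ) (x : ι → ℝ) : Prop where
  pos : 0 < u
  sum_eq : ∑ i, x i = u ^ 2
  mem_Ioc : ∀ i, x i ∈ Ioc (0 : ℝ) 1
  equation : ∀ i, (1 - x i) ^ 2 + p i * x i * (1 - x i) = t i * (u + u⁻¹) * x i

namespace IsNormalizedSolution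

variable {p t : ι → ℝ} {u v : ℝ} {x y : ι → ℝ}

lemma le_sq (h : IsNormalizedSolution p t u x) (i : ι) : x i ≤ u ^ 2 :=
  h.sum_eq ▸ Finset.single_le_sum (fun j _ ↦ (h.mem_Ioc j).1.le) (Finset.mem_univ i)

lemma card_sub_sq (h : IsNormalizedSolution p t u x) :
    Fintype.card ι - u ^ 2 = ∑ i, (1 - x i) := by
  simp [h.sum_eq]

lemma le_sqrt_card (h : IsNormalizedSolution p t u x) : u ≤ √(Fintype.card ι) := by
  refine Real.le_sqrt_of_sq_le (sub_nonneg.1 ?_)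
  rw [h.card_sub_sq]
  exact Finset.sum_nonneg fun i _ ↦ sub_nonneg.2 (h.mem_Ioc i).2

section Uniqueness

variable [Nonempty ι]

lemma eq_of_le (hp : ∀ i, p i ∈ Icc (0 : ℝ) 2) (ht : ∀ i, 0 ≤ t i)
    (hx : IsNormalizedSolution p t u x) (hy : IsNormalizedSolution p t v y) (huv : u ≤ v) :
    u = v := by
  have hsum : ∑ i, x i / u ^ 2 ≤ ∑ i, y i / v ^ 2 := by
    rw [← Finset.sum_div, ← Finset.sum_div, hx.sum_eq, hy.sum_eq,
      div_self (pow_pos hx.pos 2).ne', div_self (pow_pos hy.pos 2).ne']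
  obtain ⟨i, -, hi⟩ := Finset.exists_le_of_sum_le Finset.univ_nonempty hsum
  exact (eq_and_eq_of_share_le (hp i) (ht i) hx.pos huv (hx.mem_Ioc i) (hy.mem_Ioc i)
    (hx.equation i) (hy.equation i) hi).1

theorem unique (hp : ∀ i, p i ∈ Icc (0 : ℝ) 2) (ht : ∀ i, 0 ≤ t i)
    (hx : IsNormalizedSolution p t u x) (hy : IsNormalizedSolution p t v y) : u = v ∧ x = y := by
  obtain rfl : u = v := (le_total u v).elim (eq_of_le hp ht hx hy)
    fun hvu ↦ (eq_of_le hp ht hy hx hvu).symm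
  have hcoord {x y : ι → ℝ} (hx : IsNormalizedSolution p t u x) (hy : IsNormalizedSolution p t u y)
      {i : ι} (hi : x i ≤ y i) : x i = y i :=
    (eq_and_eq_of_share_le (hp i) (ht i) hx.pos le_rfl (hx.mem_Ioc i) (hy.mem_Ioc i)
      (hx.equation i) (hy.equation i) (by gcongr)).2
  exact ⟨rfl, funext fun i ↦ (le_total (x i) (y i)).elim (hcoord hx hy)
    fun hi ↦ (hcoord hy hx hi).symm⟩

end Uniqueness

/-- The bound `x i ≤ u ^ 2` absorbs the factor `u⁻¹`, for which no a priori bound is available. -/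
lemma sq_one_sub_le {i : ι} (h : IsNormalizedSolution p t u x) (hp : 0 ≤ p i) (ht : 0 ≤ t i) :
    (1 - x i) ^ 2 ≤ t i * (√(Fintype.card ι) ^ 3 + √(Fintype.card ι)) := by
  have hu := h.pos
  have hdrop : 0 ≤ p i * x i * (1 - x i) :=
    mul_nonneg (mul_nonneg hp (h.mem_Ioc i).1.le) (sub_nonneg.2 (h.mem_Ioc i).2)
  calc (1 - x i) ^ 2 ≤ t i * (u + u⁻¹) * x i := by linarith [h.equation i]
    _ ≤ t i * (u + u⁻¹) * u ^ 2 := by gcongr; exact h.le_sq i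
    _ = t i * (u ^ 3 + u) := by field_simp
    _ ≤ _ := by gcongr <;> exact h.le_sqrt_card

lemma abs_one_sub_sub_sqrt_le {i : ι} (h : IsNormalizedSolution p t u x) (hp : 0 ≤ p i) :
    |1 - x i - √(t i * (u + u⁻¹) * x i)| ≤ p i := by
  obtain ⟨hx0, hx1⟩ := h.mem_Ioc i
  refine (abs_sub_sqrt_le_of_sq_add_mul_eq (sub_nonneg.2 hx1) (mul_nonneg hp hx0.le)
    (h.equation i)).trans (mul_le_of_le_one_right hp hx1)

end IsNormalizedSolution

theorem exists_isNormalizedSolution [Nonempty ι] {p t : ι → ℝ} (hp : ∀ i, 0 ≤ p i)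
    (ht : ∀ i, 0 ≤ t i) : ∃ u x, IsNormalizedSolution p t u x := by
  let root (u : ℝ) (i : ι) : ℝ := quadraticRoot (p i) (t i * (u + u⁻¹))
  have hT {u : ℝ} (hu : 0 < u) (i : ι) : 0 ≤ t i * (u + u⁻¹) := mul_nonneg (ht i) (by positivity)
  obtain ⟨i₀⟩ := ‹Nonempty ι›
  obtain ⟨a, ⟨ha0, ha1⟩, ha⟩ := exists_sq_le_quadraticRoot (hp i₀) (ht i₀)
  have hcard : (1 : ℝ) ≤ Fintype.card ι := by exact_mod_cast Fintype.card_pos_iff.2 ⟨i₀⟩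
  have hcont : ContinuousOn (fun u ↦ ∑ i, root u i - u ^ 2) (Icc a √(Fintype.card ι)) := by
    refine (continuousOn_finsetSum _ fun i _ ↦ ?_).sub (by fun_prop)
    refine continuousOn_quadraticRoot.comp ?_ fun u hu ↦ hT (ha0.trans_le hu.1) i
    exact continuousOn_const.mul (continuousOn_id.add
      (continuousOn_inv₀.mono fun u hu ↦ (ha0.trans_le hu.1).ne'))
  have hleft : 0 ≤ ∑ i, root a i - a ^ 2 := sub_nonneg.2 <| ha.trans <|
    Finset.single_le_sum (f := root a) (fun i _ ↦ (quadraticRoot_mem_Ioc (hT ha0 i)).1.le)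
      (Finset.mem_univ i₀)
  have hright : ∑ i, root √(Fintype.card ι) i - √(Fintype.card ι) ^ 2 ≤ 0 := by
    rw [Real.sq_sqrt (by positivity), sub_nonpos]
    simpa using Finset.sum_le_sum fun i (_ : i ∈ Finset.univ) ↦
      (quadraticRoot_mem_Ioc (p := p i) (hT (by positivity : 0 < √(Fintype.card ι : ℝ)) i)).2
  obtain ⟨u, hu, hroot⟩ := intermediate_value_Icc' (ha1.trans (Real.one_le_sqrt.2 hcard)) hcont
    ⟨hright, hleft⟩
  have hu0 : 0 < u := ha0.trans_le hu.1
  exact ⟨u, root u, hu0, sub_eq_zero.1 hroot, fun i ↦ quadraticRoot_mem_Ioc (hT hu0 i),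
    fun i ↦ quadraticRoot_spec (hT hu0 i)⟩

section Asymptotics

lemma isBigO_div_one_add_sq_sub {m : ℝ} (hm : m ≠ 0) :
    (fun u : ℝ ↦ u / (1 + u ^ 2) - m / (1 + m ^ 2)
        - (m ^ 2 - 1) / (2 * m * (1 + m ^ 2) ^ 2) * (m ^ 2 - u ^ 2))
      =O[𝓝 m] fun u ↦ (u - m) ^ 2 := by
  let quotient (u : ℝ) : ℝ :=
    ((m ^ 2 - 1) * (u ^ 2 + 2 * m * u + 2 * m ^ 2 + 1) - 2 * m ^ 2 * (1 + m ^ 2))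
      / (2 * m * (1 + u ^ 2) * (1 + m ^ 2) ^ 2)
  have hcont : ContinuousAt quotient m :=
    ContinuousAt.div (by fun_prop) (by fun_prop) (by positivity)
  refine ((isBigO_refl (fun u : ℝ ↦ (u - m) ^ 2) (𝓝 m)).mul (hcont.tendsto.isBigO_one ℝ)).congr
    (fun u ↦ ?_) fun u ↦ mul_one _
  have : 1 + u ^ 2 ≠ 0 := by positivity
  simp only [quotient]
  field_simp
  ring

lemma sqrt_mul_sqrt_eventuallyEq_id : (fun Δ : ℝ ↦ √Δ * √Δ) =ᶠ[𝓝[≥] 0] id := by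
  filter_upwards [self_mem_nhdsWithin] with Δ hΔ using Real.mul_self_sqrt hΔ

lemma tendsto_sqrt_nhdsGE_zero : Tendsto Real.sqrt (𝓝[≥] 0) (𝓝 0) :=
  (Real.continuous_sqrt.tendsto' 0 0 Real.sqrt_zero).mono_left nhdsWithin_le_nhds

variable {c ρ : ι → ℝ} {u : ℝ → ℝ} {x : ℝ → ι → ℝ}

lemma isBigO_one_sub (hc : ∀ i, 0 ≤ c i) (hρ : ∀ i, 0 ≤ ρ i)
    (h : ∀ᶠ Δ in 𝓝[≥] 0, IsNormalizedSolution (ρ · * Δ) (c · * Δ) (u Δ) (x Δ)) (i : ι) :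
    (fun Δ ↦ 1 - x Δ i) =O[𝓝[≥] 0] Real.sqrt := by
  let K : ℝ := c i * (√(Fintype.card ι) ^ 3 + √(Fintype.card ι))
  have hK : 0 ≤ K := mul_nonneg (hc i) (by positivity)
  refine IsBigO.of_bound √K ?_
  filter_upwards [h, self_mem_nhdsWithin] with Δ hsol (hΔ : 0 ≤ Δ)
  rw [Real.norm_eq_abs, Real.norm_of_nonneg (Real.sqrt_nonneg Δ), ← Real.sqrt_mul hK]
  refine Real.abs_le_sqrt ((hsol.sq_one_sub_le (mul_nonneg (hρ i) hΔ)
    (mul_nonneg (hc i) hΔ)).trans_eq ?_)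
  ring

variable [Nonempty ι]

lemma isBigO_sub_sqrt_card (hc : ∀ i, 0 ≤ c i) (hρ : ∀ i, 0 ≤ ρ i)
    (h : ∀ᶠ Δ in 𝓝[≥] 0, IsNormalizedSolution (ρ · * Δ) (c · * Δ) (u Δ) (x Δ)) :
    (fun Δ ↦ u Δ - √(Fintype.card ι)) =O[𝓝[≥] 0] Real.sqrt := by
  have hcard : 1 ≤ √(Fintype.card ι : ℝ) :=
    Real.one_le_sqrt.2 (by exact_mod_cast Fintype.card_pos (α := ι))
  have hsum : (fun Δ ↦ ∑ i, (1 - x Δ i)) =O[𝓝[≥] 0] Real.sqrt :=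
    IsBigO.fun_sum fun i _ ↦ isBigO_one_sub hc hρ h i
  refine (IsBigO.of_bound 1 ?_).trans hsum
  filter_upwards [h] with Δ hsol
  have hle := hsol.le_sqrt_card
  rw [← hsol.card_sub_sq, one_mul, norm_sub_rev, Real.norm_of_nonneg (sub_nonneg.2 hle)]
  refine le_trans ?_ (le_abs_self _)
  calc √(Fintype.card ι) - u Δ
      ≤ (√(Fintype.card ι) - u Δ) * (√(Fintype.card ι) + u Δ) :=
        le_mul_of_one_le_right (sub_nonneg.2 hle) (by linarith [hsol.pos])
    _ = √(Fintype.card ι) ^ 2 - u Δ ^ 2 := by ring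
    _ = Fintype.card ι - u Δ ^ 2 := by rw [Real.sq_sqrt (Nat.cast_nonneg _)]

lemma isBigO_sqrt_mul_sub_sqrt (hc : ∀ i, 0 ≤ c i) (hρ : ∀ i, 0 ≤ ρ i)
    (h : ∀ᶠ Δ in 𝓝[≥] 0, IsNormalizedSolution (ρ · * Δ) (c · * Δ) (u Δ) (x Δ)) (i : ι) :
    (fun Δ ↦ √((u Δ + (u Δ)⁻¹) * x Δ i) - √(√(Fintype.card ι) + (√(Fintype.card ι))⁻¹))
      =O[𝓝[≥] 0] Real.sqrt := by
  set m := √(Fintype.card ι : ℝ)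
  have hm0 : 0 < m := by positivity
  let g (q : ℝ × ℝ) : ℝ := √((q.1 + q.1⁻¹) * q.2)
  have hg : DifferentiableAt ℝ g (m, 1) := by
    have hne : (m + m⁻¹) * 1 ≠ 0 := by positivity
    fun_prop (disch := first | exact hm0.ne' | exact hne)
  have hdist : (fun Δ ↦ ((u Δ, x Δ i) : ℝ × ℝ) - (m, 1)) =O[𝓝[≥] 0] Real.sqrt := by
    refine (isBigO_sub_sqrt_card hc hρ h).prod_left ?_
    simpa only [neg_sub] using (isBigO_one_sub hc hρ h i).neg_left
  have htendsto : Tendsto (fun Δ ↦ ((u Δ, x Δ i) : ℝ × ℝ)) (𝓝[≥] 0) (𝓝 (m, 1)) :=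
    tendsto_sub_nhds_zero_iff.1 (hdist.trans_tendsto tendsto_sqrt_nhdsGE_zero)
  simpa [g, Function.comp_def] using (hg.isBigO_sub.comp_tendsto htendsto).trans hdist

lemma isBigO_one_sub_sub_mul_sqrt (hc : ∀ i, 0 ≤ c i) (hρ : ∀ i, 0 ≤ ρ i)
    (h : ∀ᶠ Δ in 𝓝[≥] 0, IsNormalizedSolution (ρ · * Δ) (c · * Δ) (u Δ) (x Δ)) (i : ι) :
    (fun Δ ↦ 1 - x Δ i - √(c i) * √(√(Fintype.card ι) + (√(Fintype.card ι))⁻¹) * √Δ)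
      =O[𝓝[≥] 0] id := by
  have hquad : (fun Δ ↦ 1 - x Δ i - √(c i * Δ * (u Δ + (u Δ)⁻¹) * x Δ i)) =O[𝓝[≥] 0] id := by
    refine IsBigO.of_bound (ρ i) ?_
    filter_upwards [h, self_mem_nhdsWithin] with Δ hsol (hΔ : 0 ≤ Δ)
    simpa [abs_of_nonneg hΔ] using hsol.abs_one_sub_sub_sqrt_le (mul_nonneg (hρ i) hΔ)
  have hcoeff := (((isBigO_sqrt_mul_sub_sqrt hc hρ h i).const_mul_left √(c i)).mul
    (isBigO_refl Real.sqrt (𝓝[≥] 0))).trans_eventuallyEq sqrt_mul_sqrt_eventuallyEq_id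
  refine (hquad.add hcoeff).congr' ?_ EventuallyEq.rfl
  filter_upwards [self_mem_nhdsWithin] with Δ (hΔ : 0 ≤ Δ)
  rw [mul_assoc (c i * Δ), Real.sqrt_mul (mul_nonneg (hc i) hΔ), Real.sqrt_mul (hc i)]
  ring

lemma isBigO_card_sub_sq_sub_mul_sqrt (hc : ∀ i, 0 ≤ c i) (hρ : ∀ i, 0 ≤ ρ i)
    (h : ∀ᶠ Δ in 𝓝[≥] 0, IsNormalizedSolution (ρ · * Δ) (c · * Δ) (u Δ) (x Δ)) :
    (fun Δ ↦ Fintype.card ι - u Δ ^ 2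
        - (∑ i, √(c i)) * √(√(Fintype.card ι) + (√(Fintype.card ι))⁻¹) * √Δ)
      =O[𝓝[≥] 0] id := by
  refine (IsBigO.fun_sum fun i (_ : i ∈ Finset.univ) ↦
    isBigO_one_sub_sub_mul_sqrt hc hρ h i).congr' ?_ EventuallyEq.rfl
  filter_upwards [h] with Δ hsol
  rw [hsol.card_sub_sq, Finset.sum_mul, Finset.sum_mul, ← Finset.sum_sub_distrib]

theorem isBigO_div_one_add_sq_sub_expansion (hc : ∀ i, 0 ≤ c i) (hρ : ∀ i, 0 ≤ ρ i)
    (h : ∀ᶠ Δ in 𝓝[≥] 0, IsNormalizedSolution (ρ · * Δ) (c · * Δ) (u Δ) (x Δ)) :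
    (fun Δ ↦ u Δ / (1 + u Δ ^ 2) - (√(Fintype.card ι) / (1 + Fintype.card ι)
        + (Fintype.card ι - 1) / (2 * √(Fintype.card ι) * (1 + Fintype.card ι) ^ 2)
          * ((∑ i, √(c i)) * √(√(Fintype.card ι) + (√(Fintype.card ι))⁻¹) * √Δ)))
      =O[𝓝[≥] 0] id := by
  have hm : √(Fintype.card ι : ℝ) ^ 2 = Fintype.card ι := Real.sq_sqrt (by positivity)
  have hu := isBigO_sub_sqrt_card hc hρ h
  have htendsto : Tendsto u (𝓝[≥] 0) (𝓝 √(Fintype.card ι)) :=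
    tendsto_sub_nhds_zero_iff.1 (hu.trans_tendsto tendsto_sqrt_nhdsGE_zero)
  have hsq : (fun Δ ↦ (u Δ - √(Fintype.card ι)) ^ 2) =O[𝓝[≥] 0] id := by
    simpa only [sq] using (hu.mul hu).trans_eventuallyEq sqrt_mul_sqrt_eventuallyEq_id
  have htaylor := ((isBigO_div_one_add_sq_sub (m := √(Fintype.card ι))
    (by positivity)).comp_tendsto htendsto).trans hsq
  simp only [Function.comp_def, hm] at htaylor
  refine (htaylor.add ((isBigO_card_sub_sq_sub_mul_sqrt hc hρ h).const_mul_left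
    ((Fintype.card ι - 1) / (2 * √(Fintype.card ι) * (1 + Fintype.card ι) ^ 2)))).congr_left
    fun Δ ↦ ?_
  ring

end Asymptotics

section ConstrainedSystem

variable {σS σK Δ B : ℝ} {γ ρ b : ι → ℝ}

/-- The constrained system: `B` is the aggregate intensity `βSum`, and `b i` is the intensity `β i`
of the `i`-th HFT. -/
def IsConstrainedSolution (σS σK : ℝ) (γ ρ : ι → ℝ) (Δ B : ℝ) (b : ι → ℝ) : Prop :=
  B = ∑ j, b j ∧
    (∀ i, 0 = (1 - ρ i * Δ) * (b i) ^ 2 * B ^ 2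
      - (2 - ρ i * Δ + B * γ i * Δ) * (σK / σS) ^ 2 * b i * B
      + (σK / σS) ^ 4 * (1 - b i * γ i * Δ)) ∧
    0 < B ∧
    (∀ i, 0 < b i * B ∧ b i * B ≤ σK ^ 2 / σS ^ 2)

/-- The order-flow price impact `λ` as a function of the aggregate intensity `B = βSum`. -/
noncomputable def priceImpact (σS σK B : ℝ) : ℝ :=
  B * σS ^ 2 / (σK ^ 2 + B ^ 2 * σS ^ 2)

lemma priceImpact_mul_self_lt_one (hσK : σK ≠ 0) : priceImpact σS σK B * B < 1 := by
  rw [priceImpact, div_mul_eq_mul_div, div_lt_one (by positivity)]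
  have : 0 < σK ^ 2 := by positivity
  linarith

lemma priceImpact_eq (hσS : σS ≠ 0) (hσK : σK ≠ 0) :
    priceImpact σS σK B = σS / σK * (B / (σK / σS) / (1 + (B / (σK / σS)) ^ 2)) := by
  have : σK ^ 2 + B ^ 2 * σS ^ 2 ≠ 0 := by positivity
  rw [priceImpact]
  field_simp

lemma constrained_equation_iff {r ρ γ b : ℝ} (hr : r ≠ 0) (hB : B ≠ 0) :
    0 = (1 - ρ * Δ) * b ^ 2 * B ^ 2 - (2 - ρ * Δ + B * γ * Δ) * r ^ 2 * b * B
        + r ^ 4 * (1 - b * γ * Δ) ↔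
      (1 - b * B / r ^ 2) ^ 2 + ρ * Δ * (b * B / r ^ 2) * (1 - b * B / r ^ 2)
        = γ * r * Δ * (B / r + (B / r)⁻¹) * (b * B / r ^ 2) := by
  have hscale : (1 - ρ * Δ) * b ^ 2 * B ^ 2 - (2 - ρ * Δ + B * γ * Δ) * r ^ 2 * b * B
        + r ^ 4 * (1 - b * γ * Δ)
      = r ^ 4 * ((1 - b * B / r ^ 2) ^ 2 + ρ * Δ * (b * B / r ^ 2) * (1 - b * B / r ^ 2)
        - γ * r * Δ * (B / r + (B / r)⁻¹) * (b * B / r ^ 2)) := by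
    field_simp
    ring
  rw [hscale, eq_comm, mul_eq_zero_iff_left (pow_ne_zero 4 hr), sub_eq_zero]

lemma isConstrainedSolution_iff (hσS : 0 < σS) (hσK : 0 < σK) :
    IsConstrainedSolution σS σK γ ρ Δ B b ↔
      IsNormalizedSolution (ρ · * Δ) (γ · * (σK / σS) * Δ) (B / (σK / σS))
        (fun i ↦ b i * B / (σK / σS) ^ 2) := by
  have hr : 0 < σK / σS := div_pos hσK hσS
  rw [IsConstrainedSolution, ← div_pow]
  generalize σK / σS = r at *
  have hr2 : 0 < r ^ 2 := pow_pos hr 2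
  have hsum (hB : 0 < B) : B = ∑ j, b j ↔ ∑ j, b j * B / r ^ 2 = (B / r) ^ 2 := by
    rw [← Finset.sum_div, ← Finset.sum_mul, div_pow, div_left_inj' hr2.ne', sq,
      mul_left_inj' hB.ne', eq_comm]
  have hbounds (i : ι) : 0 < b i * B ∧ b i * B ≤ r ^ 2 ↔ b i * B / r ^ 2 ∈ Ioc (0 : ℝ) 1 := by
    rw [mem_Ioc, div_pos_iff_of_pos_right hr2, div_le_one hr2]
  constructor
  · rintro ⟨hs, he, hB, hb⟩
    exact ⟨div_pos hB hr, (hsum hB).1 hs, fun i ↦ (hbounds i).1 (hb i),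
      fun i ↦ (constrained_equation_iff hr.ne' hB.ne').1 (he i)⟩
  · rintro ⟨hu, hs, hb, he⟩
    have hB : 0 < B := (div_pos_iff_of_pos_right hr).1 hu
    exact ⟨(hsum hB).2 hs, fun i ↦ (constrained_equation_iff hr.ne' hB.ne').2 (he i), hB,
      fun i ↦ (hbounds i).2 (hb i)⟩

variable [Nonempty ι]

theorem existsUnique_isConstrainedSolution (hσS : 0 < σS) (hσK : 0 < σK)
    (hγ : ∀ i, 0 ≤ γ i * Δ) (hρ : ∀ i, ρ i * Δ ∈ Icc (0 : ℝ) 2) :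
    ∃! q : ℝ × (ι → ℝ), IsConstrainedSolution σS σK γ ρ Δ q.1 q.2 := by
  simp only [isConstrainedSolution_iff hσS hσK]
  have hr : 0 < σK / σS := div_pos hσK hσS
  generalize σK / σS = r at *
  have ht (i : ι) : 0 ≤ γ i * r * Δ := by
    rw [mul_right_comm]; exact mul_nonneg (hγ i) hr.le
  obtain ⟨u, x, hux⟩ := exists_isNormalizedSolution (fun i ↦ (hρ i).1) ht
  have hu := hux.pos
  refine ⟨(r * u, fun i ↦ r * x i / u), ?_, fun ⟨B, b⟩ hBb ↦ ?_⟩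
  · convert hux using 1
    · field_simp
    · funext i; field_simp
  · obtain ⟨rfl, rfl⟩ := hBb.unique hρ ht hux
    have hB : 0 < B := (div_pos_iff_of_pos_right hr).1 hBb.pos
    ext <;> field_simp

lemma eventually_existsUnique_isConstrainedSolution (hσS : 0 < σS) (hσK : 0 < σK)
    (hγ : ∀ i, 0 ≤ γ i) (hρ : ∀ i, 0 ≤ ρ i) :
    ∀ᶠ Δ in 𝓝[≥] 0, ∃! q : ℝ × (ι → ℝ), IsConstrainedSolution σS σK γ ρ Δ q.1 q.2 := by
  have hlt (i : ι) : ∀ᶠ Δ in 𝓝[≥] 0, ρ i * Δ < 2 := by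
    have hcont : Continuous fun Δ ↦ ρ i * Δ := by fun_prop
    exact nhdsWithin_le_nhds (hcont.continuousAt.eventually (gt_mem_nhds (by simp)))
  filter_upwards [eventually_all.2 hlt, self_mem_nhdsWithin] with Δ hρΔ (hΔ : 0 ≤ Δ)
  exact existsUnique_isConstrainedSolution hσS hσK (fun i ↦ mul_nonneg (hγ i) hΔ)
    fun i ↦ ⟨mul_nonneg (hρ i) hΔ, (hρΔ i).le⟩

lemma expansion_coeff_eq {K : ℝ} (hK : 0 < K) :
    (K - 1) / (2 * √K * (1 + K) ^ 2) * √(√K + (√K)⁻¹)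
      = K ^ ((1 : ℝ) / 4) * (K - 1) / (2 * (1 + K) ^ ((3 : ℝ) / 2)) / K := by
  have hroot : K ^ ((1 : ℝ) / 4) = √√K := by
    rw [Real.sqrt_eq_rpow, Real.sqrt_eq_rpow, ← Real.rpow_mul hK.le]; norm_num
  have hthree : (1 + K) ^ ((3 : ℝ) / 2) = (1 + K) * √(1 + K) := by
    rw [Real.sqrt_eq_rpow, ← Real.rpow_one_add' (by positivity) (by norm_num)]; norm_num
  have hsqrt : √(√K + (√K)⁻¹) = √(1 + K) / √√K := by
    rw [← Real.sqrt_div (by positivity)]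
    congr 1
    field_simp
    rw [Real.sq_sqrt hK.le, add_comm]
  have hq : √(1 + K) ^ 2 = 1 + K := Real.sq_sqrt (by positivity)
  have hs : √K ^ 2 = K := Real.sq_sqrt hK.le
  have hn : √√K ^ 2 = √K := Real.sq_sqrt (by positivity)
  rw [hroot, hthree, hsqrt, div_mul_div_comm, div_div,
    div_eq_div_iff (by positivity) (by positivity)]
  linear_combination 2 * (K - 1) * (1 + K) * K * hq
    - 2 * (K - 1) * (1 + K) ^ 2 * (√K * hn + hs)

theorem isBigO_priceImpact_sub_expansion {B : ℝ → ℝ} {b : ℝ → ι → ℝ} (hσS : 0 < σS) (hσK : 0 < σK)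
    (hγ : ∀ i, 0 ≤ γ i) (hρ : ∀ i, 0 ≤ ρ i)
    (h : ∀ᶠ Δ in 𝓝[≥] 0, IsConstrainedSolution σS σK γ ρ Δ (B Δ) (b Δ)) :
    (fun Δ ↦ priceImpact σS σK (B Δ) - (√(Fintype.card ι) / (1 + Fintype.card ι) * (σS / σK)
        + (Fintype.card ι : ℝ) ^ ((1 : ℝ) / 4) * (Fintype.card ι - 1)
          / (2 * (1 + Fintype.card ι) ^ ((3 : ℝ) / 2))
          * ((∑ j, √(γ j)) / Fintype.card ι) * √(σS / σK) * √Δ))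
      =O[𝓝[≥] 0] id := by
  have hr : 0 < σK / σS := div_pos hσK hσS
  have hexp := isBigO_div_one_add_sq_sub_expansion (fun i ↦ mul_nonneg (hγ i) hr.le) hρ
    (h.mono fun Δ hΔ ↦ (isConstrainedSolution_iff hσS hσK).1 hΔ)
  refine (hexp.const_mul_left (σS / σK)).congr_left fun Δ ↦ ?_
  have hcoeff := expansion_coeff_eq (K := Fintype.card ι) (by positivity)
  have hsum : ∑ i, √(γ i * (σK / σS)) = (∑ i, √(γ i)) * √(σK / σS) := by
    rw [Finset.sum_mul]
    exact Finset.sum_congr rfl fun i _ ↦ Real.sqrt_mul (hγ i) _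
  have hratio : σS / σK * √(σK / σS) = √(σS / σK) := by
    rw [← inv_div, Real.sqrt_inv, inv_mul_eq_div, Real.sqrt_div_self]
  rw [priceImpact_eq hσS.ne' hσK.ne', hsum]
  linear_combination - (σS / σK * √(σK / σS) * (∑ i, √(γ i)) * √Δ) * hcoeff
    - (Fintype.card ι : ℝ) ^ ((1 : ℝ) / 4) * (Fintype.card ι - 1)
      / (2 * (1 + Fintype.card ι) ^ ((3 : ℝ) / 2)) / Fintype.card ι * (∑ i, √(γ i)) * √Δ * hratio

end ConstrainedSystem

/-- with `(β_Σ(Δt), β_1(Δt), …, β_k(Δt))` the unique solution of the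
constrained system and `λ = β_Σσ_S²/(σ_K² + β_Σ²σ_S²)`, one has `λβ_Σ < 1` and
`λ = (k^{1/2}/(1+k))(σ_S/σ_K) + (k^{1/4}(k−1)/(2(1+k)^{3/2}))(1/k)Σ_j γ_j^{1/2}(σ_S/σ_K)^{1/2}√Δt + O(Δt)`. -/
theorem stmt8 (k : ℕ) (hk : 1 ≤ k) (σS σK : ℝ) (hσS : 0 < σS) (hσK : 0 < σK)
    (γ ρ : Fin k → ℝ) (hγ : ∀ i, 0 < γ i) (hρ : ∀ i, 0 < ρ i) :
    ∃ ε > 0, ∃ C > 0, ∀ Δt : ℝ, 0 ≤ Δt → Δt < ε →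
      ∃ (βSum : ℝ) (β : Fin k → ℝ),
        (βSum = ∑ j, β j ∧
          (∀ i, 0 = (1 - ρ i * Δt) * (β i) ^ 2 * βSum ^ 2
              - (2 - ρ i * Δt + βSum * γ i * Δt) * (σK / σS) ^ 2 * β i * βSum
              + (σK / σS) ^ 4 * (1 - β i * γ i * Δt)) ∧
          0 < βSum ∧
          (∀ i, 0 < β i * βSum ∧ β i * βSum ≤ σK ^ 2 / σS ^ 2)) ∧
        (∀ q : ℝ × (Fin k → ℝ),
          (q.1 = ∑ j, q.2 j ∧
            (∀ i, 0 = (1 - ρ i * Δt) * (q.2 i) ^ 2 * q.1 ^ 2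
                - (2 - ρ i * Δt + q.1 * γ i * Δt) * (σK / σS) ^ 2 * q.2 i * q.1
                + (σK / σS) ^ 4 * (1 - q.2 i * γ i * Δt)) ∧
            0 < q.1 ∧
            (∀ i, 0 < q.2 i * q.1 ∧ q.2 i * q.1 ≤ σK ^ 2 / σS ^ 2)) →
          q.1 = βSum ∧ q.2 = β) ∧
        (βSum * σS ^ 2 / (σK ^ 2 + βSum ^ 2 * σS ^ 2)) * βSum < 1 ∧
        |βSum * σS ^ 2 / (σK ^ 2 + βSum ^ 2 * σS ^ 2) -
            (Real.sqrt k / (1 + k) * (σS / σK)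
              + (k : ℝ) ^ ((1 : ℝ) / 4) * (k - 1) / (2 * ((1 : ℝ) + k) ^ ((3 : ℝ) / 2))
                * ((∑ j, Real.sqrt (γ j)) / k)
                * Real.sqrt (σS / σK) * Real.sqrt Δt)| ≤ C * Δt := by
  have : Nonempty (Fin k) := ⟨⟨0, hk⟩⟩
  obtain ⟨q, hq⟩ := skolem.1 <| eventually_existsUnique_isConstrainedSolution hσS hσK
    (fun i ↦ (hγ i).le) fun i ↦ (hρ i).le
  obtain ⟨C, hC, hbound⟩ := (isBigO_priceImpact_sub_expansion hσS hσK (fun i ↦ (hγ i).le)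
    (fun i ↦ (hρ i).le) (hq.mono fun Δ hΔ ↦ hΔ.1)).exists_pos
  obtain ⟨ε, hε, hsub⟩ := mem_nhdsGE_iff_exists_Ico_subset.1 (hq.and hbound.bound)
  refine ⟨ε, hε, C, hC, fun Δt h0 hlt ↦ ?_⟩
  obtain ⟨⟨hsol, huniq⟩, hle⟩ := hsub ⟨h0, hlt⟩
  refine ⟨(q Δt).1, (q Δt).2, hsol, fun q' hq' ↦ Prod.ext_iff.1 (huniq q' hq'),
    priceImpact_mul_self_lt_one hσK.ne', ?_⟩
  simpa only [Fintype.card_fin, id, priceImpact, Real.norm_eq_abs, abs_of_nonneg h0] using hle
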